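/- Logarithmic blow-up of the normal derivative for a harmonic function dominating a half-plane profile: let 0 < δ < 1/2 and let w : closure(B₁(0)) → [0,∞) be continuous on the closed unit ball of ℝ², harmonic in B₁(0), with w(x) ≥ max(⟨x, e₂⟩, 0) for all x ∈ B₁(0) and w = 0 on ∂B₁(0) ∩ {x : ⟨x, e₂⟩ < 0}. Then there is an absolute constant C > 0 such that for every x₀ ∈ ∂B₁(0) with −δ < ⟨x₀, e₂⟩ < 0, the inward radial derivative satisfies liminf_{s→0⁺} w((1−s)x₀)/s ≥ C · ln(1/δ). -/

import Mathlib

open Metric MeasureTheory Filter Set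

noncomputable section

/-- The plane `ℝ²`. -/
abbrev E2 := EuclideanSpace ℝ (Fin 2)

/-- Harmonicity via the mean-value property on balls. -/
def HarmonicOn2 (v : E2 → ℝ) (s : Set E2) : Prop :=
  ContinuousOn v s ∧ ∀ x r, 0 < r → closedBall x r ⊆ s → v x = ⨍ y in ball x r, v y

/-- Mean value property on the unit disc of `ℂ`. -/
def MV (u : ℂ → ℝ) : Prop :=
  ∀ c r, 0 < r → closedBall c r ⊆ ball (0 : ℂ) 1 → u c = ⨍ y in ball c r, u y

lemma intOn_ball {u : ℂ → ℝ} (hu : ContinuousOn u (closedBall (0 : ℂ) 1)) {c : ℂ} {r : ℝ}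
    (h : closedBall c r ⊆ ball (0 : ℂ) 1) : IntegrableOn u (ball c r) :=
  ((hu.mono (h.trans ball_subset_closedBall)).integrableOn_compact
    (isCompact_closedBall c r)).mono_set ball_subset_closedBall

lemma MV.sub {u v : ℂ → ℝ} (hu : ContinuousOn u (closedBall (0 : ℂ) 1))
    (hv : ContinuousOn v (closedBall (0 : ℂ) 1)) (mu : MV u) (mv : MV v) :
    MV (fun z => u z - v z) := by
  intro c r hr h
  have e1 := mu c r hr h
  have e2 := mv c r hr h
  rw [setAverage_eq] at e1 e2 ⊢
  rw [integral_sub (intOn_ball hu h) (intOn_ball hv h), smul_sub, ← e1, ← e2]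

lemma MV.nonneg {u : ℂ → ℝ} (hu : ContinuousOn u (closedBall (0 : ℂ) 1)) (mu : MV u)
    (hb : ∀ z ∈ sphere (0 : ℂ) 1, 0 ≤ u z) : ∀ z ∈ closedBall (0 : ℂ) 1, 0 ≤ u z := by
  obtain ⟨p0, hp0, hmin⟩ := (isCompact_closedBall (0 : ℂ) 1).exists_isMinOn ⟨0, by simp⟩ hu
  by_contra hcon
  push Not at hcon
  obtain ⟨q, hq, hq0⟩ := hcon
  have hm : u p0 < 0 := lt_of_le_of_lt (hmin hq) hq0
  have hS : IsCompact (closedBall (0 : ℂ) 1 ∩ u ⁻¹' {u p0}) :=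
    (isCompact_closedBall (0 : ℂ) 1).of_isClosed_subset
      (hu.preimage_isClosed_of_isClosed isClosed_closedBall isClosed_singleton) inter_subset_left
  obtain ⟨p, ⟨hp, hpm⟩, hmax⟩ := hS.exists_isMaxOn ⟨p0, hp0, rfl⟩ continuous_norm.continuousOn
  have hpm' : u p = u p0 := hpm
  have hp1 : ‖p‖ < 1 := by
    rcases lt_or_eq_of_le (mem_closedBall_zero_iff.1 hp) with h | h
    · exact h
    · have := hb p (by simpa using h)
      linarith
  set r := (1 - ‖p‖) / 2 with hr
  have hr0 : 0 < r := by rw [hr]; linarith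
  have hsub : closedBall p r ⊆ ball (0 : ℂ) 1 := by
    intro z hz
    rw [mem_closedBall, dist_eq_norm] at hz
    rw [mem_ball_zero_iff]
    have := norm_add_le (z - p) p
    simp only [sub_add_cancel] at this
    linarith
  have hint := intOn_ball hu hsub
  have hc : IntegrableOn (fun _ : ℂ => u p0) (ball p r) := by
    exact integrableOn_const (by exact measure_ball_lt_top.ne)
  have hvol : (volume : Measure ℂ).real (ball p r) ≠ 0 := by
    rw [Measure.real, ENNReal.toReal_ne_zero]
    exact ⟨(measure_ball_pos _ _ hr0).ne', measure_ball_lt_top.ne⟩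
  have h0 : ∫ z in ball p r, (u z - u p0) = 0 := by
    have e := mu p r hr0 hsub
    rw [setAverage_eq, hpm', smul_eq_mul] at e
    rw [integral_sub hint hc, setIntegral_const, smul_eq_mul]
    field_simp at e
    linarith
  have hle : ∀ z ∈ ball p r, 0 ≤ u z - u p0 := fun z hz =>
    sub_nonneg.2 (hmin (ball_subset_closedBall (hsub (ball_subset_closedBall hz))))
  rw [setIntegral_eq_zero_iff_of_nonneg_ae ((ae_restrict_iff' measurableSet_ball).2
    (Eventually.of_forall hle)) (hint.sub hc)] at h0
  have heq := Measure.eqOn_open_of_ae_eq h0 isOpen_ball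
    ((hu.mono (ball_subset_closedBall.trans (hsub.trans ball_subset_closedBall))).sub
      continuousOn_const) continuousOn_const
  -- a point further out
  obtain ⟨e, he, hpe⟩ : ∃ e : ℂ, ‖e‖ = 1 ∧ p = (‖p‖ : ℂ) * e := by
    by_cases h : p = 0
    · exact ⟨1, by simp, by simp [h]⟩
    · have : (‖p‖ : ℂ) ≠ 0 := by simpa using h
      refine ⟨p / ‖p‖, by simp [h], by field_simp⟩
  have hp' : p + ((r / 2 : ℝ) : ℂ) * e = ((‖p‖ + r / 2 : ℝ) : ℂ) * e := by
    push_cast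
    rw [add_mul, ← hpe]
  have hmem : p + ((r / 2 : ℝ) : ℂ) * e ∈ ball p r := by
    rw [mem_ball, dist_eq_norm, add_sub_cancel_left, norm_mul, he, Complex.norm_real,
      Real.norm_of_nonneg (by positivity)]
    linarith
  have h1 := heq hmem
  have h2 := hmax (a := p + ((r / 2 : ℝ) : ℂ) * e)
    ⟨ball_subset_closedBall (hsub (ball_subset_closedBall hmem)), by
      simp only [Pi.zero_apply] at h1
      simp only [mem_preimage, mem_singleton_iff]
      linarith⟩
  simp only [hp', mem_ofPred_eq, norm_mul, he, Complex.norm_real] at h2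
  rw [Real.norm_of_nonneg (by positivity)] at h2
  linarith

lemma MV.of_diff {F : ℂ → ℂ} (hF : DifferentiableOn ℂ F (ball 0 1)) :
    MV (fun z => (F z).re) := by
  intro c r hr h
  have hcont : ContinuousOn F (closedBall c r) := (hF.mono h).continuousOn
  -- rotation invariance
  have hrot : ∀ θ : ℝ, ∫ z in ball (0 : ℂ) r, (F (c + z * circleMap 0 1 θ)).re
      = ∫ z in ball (0 : ℂ) r, (F (c + z)).re := by
    intro θ
    let L : ℂ ≃ₗᵢ[ℝ] ℂ := rotation ⟨circleMap 0 1 θ, by simp [Submonoid.unitSphere]⟩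
    have hL : ∀ z, L z = z * circleMap 0 1 θ := by
      intro z
      exact mul_comm _ _
    have hp := (L.measurePreserving).setIntegral_preimage_emb
      (L.toHomeomorph.measurableEmbedding) (fun z => (F (c + z)).re) (ball 0 r)
    have hpre : (L ⁻¹' ball (0:ℂ) r) = ball 0 r := by
      ext z; simp
    rw [hpre] at hp
    simpa [hL] using hp
  have havg : ∀ z ∈ ball (0 : ℂ) r,
      ∫ θ in Ioc 0 (2 * Real.pi), (F (c + z * circleMap 0 1 θ)).re = 2 * Real.pi * (F c).re := by
    intro z hz
    have hmaps : MapsTo (fun ζ : ℂ => c + z * ζ) (closedBall 0 1) (closedBall c r) := by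
      intro ζ hζ
      simp only [mem_closedBall_zero_iff, mem_ball_zero_iff] at hζ hz
      simp only [mem_closedBall, dist_eq_norm, add_sub_cancel_left, norm_mul]
      nlinarith [norm_nonneg z, norm_nonneg ζ]
    have hd : DiffContOnCl ℂ (fun ζ : ℂ => F (c + z * ζ)) (ball 0 |(1:ℝ)|) := by
      have : DifferentiableOn ℂ (fun ζ : ℂ => F (c + z * ζ)) (closedBall 0 1) :=
        (hF.mono h).comp (by fun_prop) hmaps
      rw [abs_one]
      apply DifferentiableOn.diffContOnCl
      rwa [closure_ball _ one_ne_zero]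
    have e := hd.circleAverage
    rw [Real.circleAverage_def, intervalIntegral.integral_of_le (by positivity)] at e
    have hint : IntegrableOn (fun θ : ℝ => F (c + z * circleMap 0 1 θ))
        (Ioc 0 (2 * Real.pi)) := by
      have : Continuous (fun θ : ℝ => F (c + z * circleMap 0 1 θ)) := by
        have := (hcont.comp (by fun_prop) hmaps).comp_continuous
          (f := circleMap (0:ℂ) 1) (continuous_circleMap 0 1) (fun θ => by simp)
        exact this
      exact this.integrableOn_Ioc
    have e3 : ∫ θ in Ioc 0 (2 * Real.pi), (F (c + z * circleMap 0 1 θ)).re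
        = (∫ θ in Ioc 0 (2 * Real.pi), F (c + z * circleMap 0 1 θ)).re :=
      integral_re (𝕜 := ℂ) hint
    have e4 := congrArg Complex.re e
    rw [Complex.smul_re, smul_eq_mul, ← e3] at e4
    simp only [mul_zero, add_zero] at e4
    rw [← e4]
    field_simp
  have hswap : ∫ z in ball (0 : ℂ) r, ∫ θ in Ioc 0 (2 * Real.pi),
        (F (c + z * circleMap 0 1 θ)).re
      = ∫ θ in Ioc 0 (2 * Real.pi), ∫ z in ball (0 : ℂ) r,
        (F (c + z * circleMap 0 1 θ)).re := by
    apply integral_integral_swap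
    rw [Measure.prod_restrict]
    have : IntegrableOn (Function.uncurry fun (z : ℂ) (θ : ℝ) => (F (c + z * circleMap 0 1 θ)).re)
        (closedBall (0 : ℂ) r ×ˢ Icc 0 (2 * Real.pi)) (volume.prod volume) := by
      apply ContinuousOn.integrableOn_compact
      · exact (isCompact_closedBall _ _).prod isCompact_Icc
      · apply Complex.continuous_re.comp_continuousOn
        refine hcont.comp (f := fun p : ℂ × ℝ => c + p.1 * circleMap 0 1 p.2) ?_ ?_
        · exact (continuous_const.add (continuous_fst.mul
            ((continuous_circleMap 0 1).comp continuous_snd))).continuousOn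
        · rintro ⟨z, θ⟩ ⟨hz, -⟩
          simpa [dist_eq_norm] using hz
    exact this.mono_set (prod_mono ball_subset_closedBall Ioc_subset_Icc_self)
  rw [setIntegral_congr_fun measurableSet_ball havg] at hswap
  simp only [hrot] at hswap
  rw [setIntegral_const, setIntegral_const, Measure.real, Measure.real, Real.volume_Ioc,
    sub_zero, ENNReal.toReal_ofReal (by positivity), smul_eq_mul, smul_eq_mul] at hswap
  have hshift : ∫ z in ball (0 : ℂ) r, (F (c + z)).re = ∫ z in ball c r, (F z).re := by
    have hp := (measurePreserving_add_left (volume : Measure ℂ) c).setIntegral_preimage_emb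
      (measurableEmbedding_addLeft c) (fun z => (F z).re) (ball c r)
    rw [← hp]
    congr 2
    simp
  have hvol : ((volume : Measure ℂ) (ball (0:ℂ) r)).toReal ≠ 0 := by
    rw [ENNReal.toReal_ne_zero]
    exact ⟨(measure_ball_pos _ _ hr).ne', measure_ball_lt_top.ne⟩
  have hve : (volume : Measure ℂ) (ball c r) = volume (ball (0:ℂ) r) :=
    Measure.addHaar_ball_center _ _ _
  rw [setAverage_eq, ← hshift, Measure.real, hve, smul_eq_mul]
  have hpi := Real.pi_pos
  field_simp
  nlinarith

lemma MV.of_E2 {w : E2 → ℝ} (hw : HarmonicOn2 w (ball 0 1)) :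
    MV (fun z => w (Complex.orthonormalBasisOneI.repr z)) := by
  intro c r hr h
  set T := Complex.orthonormalBasisOneI.repr with hT
  have hpre : ∀ c : ℂ, ∀ r : ℝ, T ⁻¹' (ball (T c) r) = ball c r := by
    intro c r; ext z; simp
  have hsub : closedBall (T c) r ⊆ ball 0 1 := by
    intro y hy
    obtain ⟨z, rfl⟩ := T.surjective y
    have : z ∈ ball (0:ℂ) 1 := h (by simpa using hy)
    simpa using this
  have e := hw.2 (T c) r hr hsub
  have hp := (T.measurePreserving).setIntegral_preimage_emb
      (T.toHomeomorph.measurableEmbedding) w (ball (T c) r)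
  have hv := (T.measurePreserving).measure_preimage (measurableSet_ball (x := T c) (ε := r)).nullMeasurableSet
  rw [hpre] at hp hv
  rw [setAverage_eq] at e ⊢
  change w (T c) = _
  rw [e, hp, Measure.real, Measure.real, hv]

lemma MV.le {u v : ℂ → ℝ} (hu : ContinuousOn u (closedBall (0 : ℂ) 1))
    (hv : ContinuousOn v (closedBall (0 : ℂ) 1)) (mu : MV u) (mv : MV v)
    (hb : ∀ z ∈ sphere (0 : ℂ) 1, u z ≤ v z) : ∀ z ∈ closedBall (0 : ℂ) 1, u z ≤ v z := by
  intro z hz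
  have := MV.nonneg (u := fun z => v z - u z) (hv.sub hu) (MV.sub hv hu mv mu)
    (fun z hz => sub_nonneg.2 (hb z hz)) z hz
  exact sub_nonneg.1 this

/-- the holomorphic logarithm used in the barrier -/
def LL (z : ℂ) : ℂ := Complex.log (1 + z) - Complex.log (1 - z)

/-- The holomorphic function whose real part is the harmonic extension of `max y 0`. -/
def PP (z : ℂ) : ℂ :=
  -Complex.I * z / 2 + (1 / (2 * Real.pi) : ℝ) * ((1 - z ^ 2) * dslope LL 0 z)

lemma slit_add {z : ℂ} (h : ‖z‖ ≤ 1) (h1 : z ≠ -1) : 0 < (1 + z).re := by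
  rw [Complex.add_re, Complex.one_re]
  by_contra hc
  push Not at hc
  have h2 : z.re ^ 2 + z.im ^ 2 = ‖z‖ ^ 2 := by
    rw [← Complex.normSq_eq_norm_sq, Complex.normSq_apply]; ring
  have h3 : ‖z‖ ^ 2 ≤ 1 := by nlinarith [norm_nonneg z]
  apply h1
  apply Complex.ext
  · simp; nlinarith [sq_nonneg z.im]
  · simp; nlinarith [sq_nonneg z.im]

lemma slit_sub {z : ℂ} (h : ‖z‖ ≤ 1) (h1 : z ≠ 1) : 0 < (1 - z).re := by
  have := slit_add (z := -z) (by simpa using h) (by simpa using h1)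
  simpa [sub_eq_add_neg] using this

lemma slit_of_re {z : ℂ} (h : 0 < z.re) : z ∈ Complex.slitPlane := Or.inl h

lemma LL_hasDerivAt {z : ℂ} (h : ‖z‖ ≤ 1) (h1 : z ≠ 1) (h2 : z ≠ -1) :
    HasDerivAt LL (1 / (1 + z) + 1 / (1 - z)) z := by
  have a := ((hasDerivAt_id z).const_add 1).clog (slit_of_re (slit_add h h2))
  have b := ((hasDerivAt_id z).const_sub 1).clog (slit_of_re (slit_sub h h1))
  refine (a.sub b).congr_deriv ?_
  simp [neg_div]

lemma norm_ne {z : ℂ} (hz : ‖z‖ < 1) : z ≠ 1 ∧ z ≠ -1 := by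
  constructor <;> rintro rfl <;> simp at hz

lemma dslope_diff : DifferentiableOn ℂ (dslope LL 0) (ball 0 1) := by
  rw [Complex.differentiableOn_dslope (ball_mem_nhds _ one_pos)]
  intro z hz
  rw [mem_ball_zero_iff] at hz
  exact (LL_hasDerivAt hz.le (norm_ne hz).1 (norm_ne hz).2).differentiableAt.differentiableWithinAt

lemma dslope_eq {z : ℂ} (hz : z ≠ 0) : dslope LL 0 z = LL z / z := by
  rw [dslope_of_ne _ hz, slope_def_field]
  simp [LL]

lemma PP_diff : DifferentiableOn ℂ PP (ball 0 1) := by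
  have := dslope_diff
  unfold PP
  fun_prop

lemma PP_eq {z : ℂ} (hz : z ≠ 0) :
    PP z = -Complex.I * z / 2 + (1 / (2 * Real.pi) : ℝ) * ((1 - z ^ 2) * LL z / z) := by
  rw [PP, dslope_eq hz, mul_div_assoc (1 - z ^ 2)]

lemma xlogx {z : ℂ} (hz : z = 0 ∨ z ∈ Complex.slitPlane) :
    ContinuousAt (fun z : ℂ => z * Complex.log z) z := by
  rcases hz with rfl | hz
  · rw [ContinuousAt]
    simp only [zero_mul]
    have h : Tendsto (fun z : ℂ => |‖z‖ * Real.log ‖z‖| + ‖z‖ * Real.pi) (nhds 0) (nhds 0) := by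
      have : Continuous (fun z : ℂ => |‖z‖ * Real.log ‖z‖| + ‖z‖ * Real.pi) := by
        have := Real.continuous_mul_log.comp (continuous_norm (E := ℂ))
        exact (continuous_abs.comp this).add (by fun_prop)
      simpa using this.tendsto 0
    refine squeeze_zero_norm (fun z => ?_) h
    rw [norm_mul, abs_mul, abs_norm, ← mul_add]
    gcongr
    calc ‖Complex.log z‖ ≤ |(Complex.log z).re| + |(Complex.log z).im| :=
          Complex.norm_le_abs_re_add_abs_im _
      _ ≤ _ := by
        rw [Complex.log_re, Complex.log_im]
        gcongr
        exact Complex.abs_arg_le_pi z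
  · exact continuousAt_id.mul (continuousAt_clog hz)

lemma PP_cont : ContinuousOn PP (closedBall 0 1) := by
  intro z hz
  rw [mem_closedBall_zero_iff] at hz
  rcases lt_or_eq_of_le hz with h | h
  · exact (PP_diff.differentiableAt (isOpen_ball.mem_nhds (by simpa using h))).continuousAt.continuousWithinAt
  · have hz0 : z ≠ 0 := by rintro rfl; simp at h
    apply ContinuousAt.continuousWithinAt
    have a : ContinuousAt (fun z : ℂ => (1 + z) * Complex.log (1 + z)) z := by
      refine ContinuousAt.comp (g := fun z : ℂ => z * Complex.log z) (xlogx ?_) (by fun_prop)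
      by_cases h1 : z = -1
      · left; simp [h1]
      · exact Or.inr (slit_of_re (slit_add hz h1))
    have b : ContinuousAt (fun z : ℂ => (1 - z) * Complex.log (1 - z)) z := by
      refine ContinuousAt.comp (g := fun z : ℂ => z * Complex.log z) (xlogx ?_) (by fun_prop)
      by_cases h1 : z = 1
      · left; simp [h1]
      · exact Or.inr (slit_of_re (slit_sub hz h1))
    have c : ContinuousAt (fun z : ℂ => -Complex.I * z / 2 + (1 / (2 * Real.pi) : ℝ) *
        (((1 - z) * ((1 + z) * Complex.log (1 + z)) - (1 + z) * ((1 - z) * Complex.log (1 - z)))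
          / z)) z := by
      refine ContinuousAt.add (by fun_prop) (continuousAt_const.mul (ContinuousAt.div ?_ continuousAt_id hz0))
      exact ((by fun_prop : ContinuousAt (fun z : ℂ => 1 - z) z).mul a).sub
        ((by fun_prop : ContinuousAt (fun z : ℂ => 1 + z) z).mul b)
    refine c.congr ?_
    filter_upwards [isOpen_ne.mem_nhds hz0] with y hy
    rw [PP_eq hy, LL]
    congr 3
    ring

lemma arg_I_mul {v : ℂ} (hv : 0 < v.re) : (Complex.I * v).arg = Real.pi / 2 + v.arg := by
  have h0 : v ≠ 0 := by rintro rfl; simp at hv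
  have h := Complex.abs_arg_lt_pi_div_two_iff.2 (Or.inl hv)
  rw [abs_lt] at h
  rw [Complex.arg_mul Complex.I_ne_zero h0, Complex.arg_I]
  rw [Complex.arg_I]
  constructor <;> linarith [Real.pi_pos]

lemma sq_of_norm {z : ℂ} (h : ‖z‖ = 1) : z.re ^ 2 + z.im ^ 2 = 1 := by
  have h2 : z.re ^ 2 + z.im ^ 2 = ‖z‖ ^ 2 := by
    rw [← Complex.normSq_eq_norm_sq, Complex.normSq_apply]; ring
  rw [h2, h]; norm_num

lemma LL_im_pos {z : ℂ} (h : ‖z‖ = 1) (hy : 0 < z.im) : (LL z).im = Real.pi / 2 := by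
  have hs := sq_of_norm h
  have h1 : z ≠ 1 := by rintro rfl; simp at hy
  have hd := slit_sub h.le h1
  have hx : 0 < 1 - z.re := by simpa using hd
  have e : 1 + z = ((z.im / (1 - z.re) : ℝ) : ℂ) * (Complex.I * (1 - z)) := by
    apply Complex.ext
    · rw [Complex.re_ofReal_mul]
      simp
      field_simp
      nlinarith
    · rw [Complex.im_ofReal_mul]
      simp
      field_simp
  rw [LL, Complex.sub_im, Complex.log_im, Complex.log_im, e, Complex.arg_real_mul _ (by positivity),
    arg_I_mul hd]
  ring

lemma LL_im_neg {z : ℂ} (h : ‖z‖ = 1) (hy : z.im < 0) : (LL z).im = -(Real.pi / 2) := by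
  have := LL_im_pos (z := -z) (by simpa using h) (by simpa using hy)
  have e : LL (-z) = - LL z := by simp [LL, sub_eq_add_neg, add_comm]
  rw [e, Complex.neg_im] at this
  linarith

lemma PP_re_sphere {z : ℂ} (h : ‖z‖ = 1) :
    (PP z).re = z.im / 2 + 1 / Real.pi * (z.im * (LL z).im) := by
  have hz0 : z ≠ 0 := by rintro rfl; simp at h
  have e : (1 - z ^ 2) * LL z / z = -2 * Complex.I * z.im * LL z := by
    have hs := sq_of_norm h
    have : (1 - z ^ 2) = -2 * Complex.I * z.im * z := by
      apply Complex.ext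
      · simp [pow_two]; nlinarith
      · simp [pow_two]; nlinarith
    rw [this]
    field_simp
  rw [PP_eq hz0, e, Complex.add_re, Complex.re_ofReal_mul]
  simp
  field_simp
  try ring

lemma PP_pos {z : ℂ} (h : ‖z‖ = 1) (hy : 0 ≤ z.im) : (PP z).re = z.im := by
  rw [PP_re_sphere h]
  rcases hy.eq_or_lt with hy | hy
  · simp [← hy]
  · rw [LL_im_pos h hy]
    field_simp; ring

lemma PP_neg {z : ℂ} (h : ‖z‖ = 1) (hy : z.im < 0) : (PP z).re = 0 := by
  rw [PP_re_sphere h, LL_im_neg h hy]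
  field_simp; ring

lemma PP_deriv {z : ℂ} (h : ‖z‖ = 1) (hy : z.im < 0) :
    HasDerivAt (fun s : ℝ => (PP ((1 - s : ℝ) * z)).re)
      (-z.im / 2 + 1 / Real.pi * (z.re * (LL z).re - 1)) 0 := by
  have hz0 : z ≠ 0 := by rintro rfl; simp at h
  have h1 : z ≠ 1 := by rintro rfl; simp at hy
  have h2 : z ≠ -1 := by rintro rfl; simp at hy
  have hs := sq_of_norm h
  have hL := LL_hasDerivAt h.le h1 h2
  have hG : HasDerivAt (fun z : ℂ => -Complex.I * z / 2 + (1 / (2 * Real.pi) : ℝ) *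
      ((1 - z ^ 2) * LL z / z)) (-Complex.I / 2 + (1 / (2 * Real.pi) : ℝ) *
      (((-(2 * z)) * LL z + (1 - z ^ 2) * (1 / (1 + z) + 1 / (1 - z))) * z
        - (1 - z ^ 2) * LL z) / z ^ 2) z := by
    have a : HasDerivAt (fun z : ℂ => 1 - z ^ 2) (-(2 * z)) z := by
      simpa using (hasDerivAt_pow 2 z).const_sub 1
    have b : HasDerivAt (fun z : ℂ => -Complex.I * z / 2) (-Complex.I / 2) z := by
      simpa using ((hasDerivAt_id z).const_mul (-Complex.I)).div_const 2
    have := b.add (((a.mul hL).div (hasDerivAt_id z) hz0).const_mul (((1 / (2 * Real.pi) : ℝ)) : ℂ))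
    refine this.congr_deriv ?_
    simp [mul_div_assoc]
  have hP : HasDerivAt PP _ z := hG.congr_of_eventuallyEq (by
    filter_upwards [isOpen_ne.mem_nhds hz0] with y hy
    exact PP_eq hy)
  have hline : HasDerivAt (fun s : ℂ => (1 - s) * z) (-z) ((0 : ℝ) : ℂ) := by
    simpa using ((hasDerivAt_id ((0:ℝ) : ℂ)).const_sub 1).mul_const z
  have hc := (hP.comp_of_eq _ hline (by simp)).real_of_complex
  convert hc using 1
  · funext s; simp
  have e1 : (1 - z ^ 2) * (1 / (1 + z) + 1 / (1 - z)) = 2 := by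
    have h3 : 1 + z ≠ 0 := fun h => h2 (by linear_combination h)
    have h4 : 1 - z ≠ 0 := fun h => h1 (by linear_combination -h)
    field_simp
    ring
  have e2 : 1 + z ^ 2 = 2 * z.re * z := by
    apply Complex.ext
    · simp [pow_two]; nlinarith
    · simp [pow_two]; ring
  rw [e1]
  have e3 : (-Complex.I / 2 + (1 / (2 * Real.pi) : ℝ) *
      (((-(2 * z)) * LL z + 2) * z - (1 - z ^ 2) * LL z) / z ^ 2) * -z
      = Complex.I * z / 2 + (1 / (2 * Real.pi) : ℝ) * (2 * z.re * LL z - 2) := by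
    have : (((-(2 * z)) * LL z + 2) * z - (1 - z ^ 2) * LL z) = - (2 * z.re * LL z - 2) * z := by
      linear_combination (- LL z) * e2
    rw [mul_div_assoc, this]
    field_simp
    ring
  rw [e3, Complex.add_re, Complex.re_ofReal_mul]
  simp
  field_simp
  try ring

lemma LL_re {z : ℂ} (h : ‖z‖ = 1) (hy : z.im < 0) :
    (LL z).re = (Real.log (1 + z.re) - Real.log (1 - z.re)) / 2 := by
  have hs := sq_of_norm h
  have h1 : z ≠ 1 := by rintro rfl; simp at hy
  have h2 : z ≠ -1 := by rintro rfl; simp at hy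
  have a : 0 < 1 - z.re := by simpa using slit_sub h.le h1
  have b : 0 < 1 + z.re := by simpa using slit_add h.le h2
  have e1 : ‖1 + z‖ ^ 2 = 2 * (1 + z.re) := by
    rw [← Complex.normSq_eq_norm_sq, Complex.normSq_apply]
    simp; nlinarith
  have e2 : ‖1 - z‖ ^ 2 = 2 * (1 - z.re) := by
    rw [← Complex.normSq_eq_norm_sq, Complex.normSq_apply]
    simp; nlinarith
  have f1 := congrArg Real.log e1
  have f2 := congrArg Real.log e2
  rw [Real.log_pow, Real.log_mul two_ne_zero (by positivity)] at f1 f2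
  rw [LL, Complex.sub_re, Complex.log_re, Complex.log_re]
  push_cast at f1 f2
  linarith

lemma log_bound {x y δ : ℝ} (hs : x ^ 2 + y ^ 2 = 1) (hδ : δ < 1 / 2) (h1 : -δ < y) (h2 : y < 0) :
    1 / 10 * Real.log (1 / δ) ≤ x * ((Real.log (1 + x) - Real.log (1 - x)) / 2) - 1 := by
  have key : ∀ a : ℝ, 0 ≤ a → a ^ 2 + y ^ 2 = 1 →
      1 / 10 * Real.log (1 / δ) ≤ a * ((Real.log (1 + a) - Real.log (1 - a)) / 2) - 1 := by
    intro a ha hs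
    have ha1 : 0.86 ≤ a := by nlinarith
    have hσ : 0 < -y := by linarith
    have hδ0 : 0 < δ := by linarith
    have e : 1 - a = (-y) ^ 2 / (1 + a) := by
      field_simp
      nlinarith
    rw [e, Real.log_div (x := (-y) ^ 2) (by positivity) (by positivity), Real.log_pow]
    have l1 : Real.log (1 / δ) ≤ - Real.log (-y) := by
      rw [one_div, Real.log_inv]
      exact neg_le_neg (Real.log_le_log hσ (by linarith))
    have l2 : Real.log 2 ≤ - Real.log (-y) := by
      rw [← Real.log_inv]
      apply Real.log_le_log (by norm_num)
      rw [le_inv_comm₀ (by norm_num) hσ]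
      linarith
    have l3 := Real.log_two_gt_d9
    have l4 : 0.61 ≤ Real.log (1 + a) := by
      have m1 : Real.log (2 * 0.93) ≤ Real.log (1 + a) :=
        Real.log_le_log (by norm_num) (by linarith)
      rw [Real.log_mul (by norm_num) (by norm_num)] at m1
      have m2 := Real.one_sub_inv_le_log_of_pos (x := 0.93) (by norm_num)
      norm_num at m2 m1 l3 ⊢
      linarith
    push_cast
    nlinarith [mul_nonneg (sub_nonneg.2 ha1) (by linarith : 0 ≤ Real.log (1 + a) - Real.log (-y))]
  rcases le_total 0 x with hx | hx
  · exact key x hx hs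
  · have := key (-x) (by linarith) (by linarith)
    rw [sub_neg_eq_add, ← sub_eq_add_neg] at this
    linarith

/-- Logarithmic blow-up of the inward normal derivative for a harmonic function dominating
the half-plane profile `x ↦ max ⟨x, e₂⟩ 0` and vanishing on the lower part of the unit circle. -/
theorem stmt_6 :
    ∃ C : ℝ, 0 < C ∧
      ∀ δ : ℝ, 0 < δ → δ < 1 / 2 →
      ∀ w : E2 → ℝ,
        ContinuousOn w (closedBall (0 : E2) 1) →
        (∀ x ∈ closedBall (0 : E2) 1, 0 ≤ w x) →
        HarmonicOn2 w (ball (0 : E2) 1) →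
        (∀ x ∈ ball (0 : E2) 1, max (x 1) 0 ≤ w x) →
        (∀ x ∈ sphere (0 : E2) 1, x 1 < 0 → w x = 0) →
        ∀ x₀ ∈ sphere (0 : E2) 1, -δ < x₀ 1 → x₀ 1 < 0 →
          C * Real.log (1 / δ) ≤
            Filter.liminf (fun s : ℝ => w ((1 - s) • x₀) / s) (nhdsWithin 0 (Set.Ioi 0)) := by
  have hpi := Real.pi_pos
  refine ⟨1 / (10 * Real.pi), by positivity, ?_⟩
  intro δ hδ0 hδ w hwc hw0 hwh hwmax hwz x₀ hx₀ hx₀δ hx₀n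
  set T := Complex.orthonormalBasisOneI.repr with hT
  have hT1 : ∀ z, (T z) 1 = z.im := by
    intro z; simp [hT]
  obtain ⟨z, rfl⟩ := T.surjective x₀
  rw [hT1] at hx₀δ hx₀n
  have hz1 : ‖z‖ = 1 := by simpa using hx₀
  have hMV : MV (fun z => w (T z)) := MV.of_E2 hwh
  have hcont : ContinuousOn (fun z => w (T z)) (closedBall 0 1) :=
    hwc.comp T.continuous.continuousOn (fun z hz => by simpa using hz)
  have hpt : ∀ s : ℝ, (1 - s) • T z = T (((1 - s : ℝ) : ℂ) * z) := by
    intro s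
    rw [← Complex.real_smul, map_smul]
  have hline : ∀ s ∈ Ioo (0:ℝ) 1, ((1 - s : ℝ) : ℂ) * z ∈ closedBall (0:ℂ) 1 := by
    intro s hs
    rw [mem_closedBall_zero_iff, norm_mul, hz1, Complex.norm_real,
      Real.norm_of_nonneg (by linarith [hs.2])]
    linarith [hs.1]
  -- lower bound
  have hge : ∀ y ∈ closedBall (0:E2) 1, y 1 ≤ w y := by
    intro y hy
    rw [← closure_ball (0:E2) one_ne_zero] at hy hwc
    refine ContinuousWithinAt.closure_le (s := ball (0:E2) 1) hy ?_
      ((hwc y hy).mono subset_closure) (fun x hx => (le_max_left _ _).trans (hwmax x hx))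
    have : Continuous (fun y : E2 => y 1) := by fun_prop
    exact this.continuousWithinAt
  have hPc : ContinuousOn (fun z => (PP z).re) (closedBall 0 1) :=
    Complex.continuous_re.comp_continuousOn PP_cont
  have hlow : ∀ z ∈ closedBall (0:ℂ) 1, (PP z).re ≤ w (T z) := by
    refine MV.le hPc hcont (MV.of_diff PP_diff) hMV ?_
    · intro y hy
      have hy1 : ‖y‖ = 1 := by simpa using hy
      have hyT : T y ∈ closedBall (0:E2) 1 := by simp [hy1]
      rcases le_or_gt 0 y.im with h | h
      · have := hge _ hyT
        rw [hT1] at this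
        rw [PP_pos hy1 h]
        linarith
      · rw [PP_neg hy1 h]
        exact hw0 _ hyT
  -- upper bound
  obtain ⟨K, hK0, hK⟩ : ∃ K : ℝ, 0 ≤ K ∧ ∀ y ∈ closedBall (0:ℂ) 1,
      w (T y) ≤ K * Real.log ‖2 - star z * y‖ := by
    obtain ⟨M, hM⟩ := (isCompact_closedBall (0:ℂ) 1).exists_bound_of_continuousOn hcont
    have hst : ‖star z‖ = 1 := by simpa using hz1
    have hre : ∀ y ∈ closedBall (0:ℂ) 1, 1 ≤ (2 - star z * y).re := by
      intro y hy
      have h1 : (star z * y).re ≤ 1 := by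
        refine (Complex.re_le_norm _).trans ?_
        rw [norm_mul, hst, one_mul]
        simpa using hy
      simp only [Complex.sub_re, Complex.re_ofNat]
      linarith
    set e := z.im ^ 2 / 2 with he
    have he0 : 0 < e := by have := hx₀n.ne; positivity
    have hM0 : 0 ≤ M := (norm_nonneg _).trans (hM 0 (by simp))
    set K := M / Real.log (1 + e) with hKdef
    have hl : 0 < Real.log (1 + e) := Real.log_pos (by linarith)
    have hK0 : 0 ≤ K := by positivity
    refine ⟨K, hK0, ?_⟩
    have hdiff : ∀ y ∈ closedBall (0:ℂ) 1,
        DifferentiableAt ℂ (fun y => (K:ℂ) * Complex.log (2 - star z * y)) y := by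
      intro y hy
      have : 2 - star z * y ∈ Complex.slitPlane := Or.inl (by linarith [hre y hy])
      exact (DifferentiableAt.clog (f := fun y => 2 - star z * y) (by fun_prop) this).const_mul _
    have hc2 : ContinuousOn (fun y => ((K:ℂ) * Complex.log (2 - star z * y)).re)
        (closedBall 0 1) := Complex.continuous_re.comp_continuousOn
          (fun y hy => (hdiff y hy).continuousAt.continuousWithinAt)
    have hval : ∀ y, ((K:ℂ) * Complex.log (2 - star z * y)).re
        = K * Real.log ‖2 - star z * y‖ := by
      intro y; rw [Complex.re_ofReal_mul, Complex.log_re]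
    intro y hy
    rw [← hval]
    revert y
    refine MV.le hcont hc2 hMV (MV.of_diff (fun y hy =>
      (hdiff y (ball_subset_closedBall hy)).differentiableWithinAt)) ?_
    · intro y hy
      have hy1 : ‖y‖ = 1 := by simpa using hy
      have hyc : y ∈ closedBall (0:ℂ) 1 := by simp [hy1]
      rw [hval]
      have hn : 1 ≤ ‖2 - star z * y‖ := (hre y hyc).trans (Complex.re_le_norm _)
      rcases le_or_gt 0 y.im with h | h
      · have h1 : w (T y) ≤ M := (le_abs_self _).trans (hM y hyc)
        have h2 : 1 + e ≤ ‖2 - star z * y‖ := by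
          refine le_trans ?_ (Complex.re_le_norm _)
          have a := sq_of_norm hz1
          have b := sq_of_norm hy1
          simp [he]
          nlinarith [sq_nonneg (z.re - y.re), mul_nonneg h (neg_nonneg.2 hx₀n.le)]
        have h3 : Real.log (1 + e) ≤ Real.log ‖2 - star z * y‖ :=
          Real.log_le_log (by linarith) h2
        have h4 : M = K * Real.log (1 + e) := by rw [hKdef]; field_simp
        have := mul_le_mul_of_nonneg_left h3 hK0
        linarith
      · have : w (T y) = 0 := hwz _ (by simp [hy1]) (by rw [hT1]; exact h)
        rw [this]
        exact mul_nonneg hK0 (Real.log_nonneg hn)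
  have hbdd : ∀ s ∈ Ioo (0:ℝ) 1, w ((1 - s) • T z) / s ≤ K := by
    intro s hs
    rw [div_le_iff₀ hs.1, hpt]
    refine (hK _ (hline s hs)).trans ?_
    gcongr
    have h1 : star z * z = 1 := by
      have := Complex.normSq_eq_conj_mul_self (z := z)
      rw [Complex.normSq_eq_norm_sq, hz1] at this
      simpa using this.symm
    have h2 : 2 - star z * (((1 - s : ℝ) : ℂ) * z) = ((1 + s : ℝ) : ℂ) := by
      push_cast
      linear_combination (-(1 - (s:ℂ))) * h1
    rw [h2, Complex.norm_real, Real.norm_of_nonneg (by linarith [hs.1])]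
    have := Real.log_le_sub_one_of_pos (x := 1 + s) (by linarith [hs.1])
    linarith
  have hev : ∀ᶠ s in nhdsWithin (0:ℝ) (Ioi 0), s ∈ Ioo (0:ℝ) 1 :=
    Ioo_mem_nhdsGT one_pos
  have hder := PP_deriv hz1 hx₀n
  have htend : Tendsto (fun s : ℝ => (PP ((1 - s : ℝ) * z)).re / s) (nhdsWithin 0 (Ioi 0))
      (nhds (-z.im / 2 + 1 / Real.pi * (z.re * (LL z).re - 1))) := by
    have := (hasDerivAt_iff_tendsto_slope.1 hder).mono_left
      (nhdsWithin_mono (0:ℝ) (fun x (hx : 0 < x) => hx.ne'))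
    refine this.congr (fun s => ?_)
    rw [slope_def_field]
    simp [PP_neg hz1 hx₀n]
  have hfin : 1 / (10 * Real.pi) * Real.log (1 / δ)
      ≤ -z.im / 2 + 1 / Real.pi * (z.re * (LL z).re - 1) := by
    have := log_bound (sq_of_norm hz1) hδ hx₀δ hx₀n
    rw [← LL_re hz1 hx₀n] at this
    have h2 := mul_le_mul_of_nonneg_left this (by positivity : 0 ≤ 1 / Real.pi)
    have h3 : 1 / (10 * Real.pi) * Real.log (1 / δ)
      = 1 / Real.pi * (1 / 10 * Real.log (1 / δ)) := by field_simp
    rw [h3]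
    linarith
  refine hfin.trans ?_
  rw [← htend.liminf_eq]
  refine liminf_le_liminf ?_ htend.isBoundedUnder_ge ?_
  · filter_upwards [hev] with s hs
    rw [hpt]
    exact div_le_div_of_nonneg_right (hlow _ (hline s hs)) hs.1.le
  · apply IsBoundedUnder.isCoboundedUnder_ge
    exact isBoundedUnder_of_eventually_le (a := K) (hev.mono hbdd)
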